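/- Let S = {a,a',b,b'} be a four-letter alphabet with complementation. Any two equivalent polybox codes V, W ⊆ S^4 with |V| = 15 are strongly equivalent. -/

import Mathlib

/- Common framework: polybox codes over a finite alphabet `S` with a
complementation `c : S → S` (an involution without fixed points). -/

namespace PolyboxPaper

variable {S : Type} [Fintype S] [DecidableEq S] {d : ℕ}

/-- Two words are dichotomous: they differ by complementation at some position. -/
def Dich (c : S → S) (v w : Fin d → S) : Prop := ∃ i, v i = c (w i)

instance (c : S → S) (v w : Fin d → S) : Decidable (Dich c v w) :=
  decidable_of_iff (∃ i, v i = c (w i)) Iff.rfl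

/-- A polybox code: every two distinct words are dichotomous. -/
def IsCode (c : S → S) (V : Finset (Fin d → S)) : Prop :=
  ∀ v ∈ V, ∀ w ∈ V, v ≠ w → Dich c v w

/-- A cube tiling code: a polybox code with `2 ^ d` words. -/
def CubeTiling (c : S → S) (V : Finset (Fin d → S)) : Prop :=
  IsCode c V ∧ V.card = 2 ^ d

/-- `v` and `w` form a twin pair in the `i`-th direction. -/
def TwinPair (c : S → S) (v w : Fin d → S) (i : Fin d) : Prop :=
  v i = c (w i) ∧ ∀ j, j ≠ i → v j = w j

/-- A code is twin pair free if no two of its words form a twin pair. -/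
def TwinPairFree (c : S → S) (V : Finset (Fin d → S)) : Prop :=
  ∀ v ∈ V, ∀ w ∈ V, ∀ i, ¬ TwinPair c v w i

/-- A single glue-and-cut operation: a twin pair `v, w` of `V` in the `i`-th
direction is replaced by a twin pair `q, t` in the `i`-th direction agreeing
with `v` (and `w`) at all positions `j ≠ i`. -/
def GCStep (c : S → S) (V W : Finset (Fin d → S)) : Prop :=
  ∃ (v w q t : Fin d → S) (i : Fin d), v ∈ V ∧ w ∈ V ∧ TwinPair c v w i ∧
    TwinPair c q t i ∧ (∀ j, j ≠ i → q j = v j) ∧ W = (V \ {v, w}) ∪ {q, t}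

/-- `W` is obtained from `V` by gluing and cutting (finite, possibly empty,
sequence of single glue-and-cut operations); equivalently, `V` and `W` are
strongly equivalent. -/
def GC (c : S → S) (V W : Finset (Fin d → S)) : Prop :=
  Relation.ReflTransGen (GCStep c) V W

/-- Passing from `V` to `W` by gluing and cutting keeping `Q` fixed:
every intermediate code contains `Q`. -/
def GCFix (c : S → S) (Q V W : Finset (Fin d → S)) : Prop :=
  Relation.ReflTransGen (fun A B => GCStep c A B ∧ Q ⊆ B) V W

/-- A realization: for each coordinate a map `f i : S → Set (X i)` taking
nonempty proper values and sending complementary letters to complementary sets. -/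
def IsRealization (c : S → S) (X : Fin d → Type) (f : ∀ i, S → Set (X i)) : Prop :=
  ∀ i s, (f i s).Nonempty ∧ f i s ≠ Set.univ ∧ f i (c s) = (f i s)ᶜ

/-- The box associated to a word by a realization. -/
def box {X : Fin d → Type} (f : ∀ i, S → Set (X i)) (v : Fin d → S) :
    Set (∀ i, X i) :=
  {x | ∀ i, x i ∈ f i (v i)}

/-- The word `w` is covered by the code `V` (`w ⊑ V`). -/
def CoveredWord (c : S → S) (w : Fin d → S) (V : Finset (Fin d → S)) : Prop :=
  ∀ (X : Fin d → Type) (f : ∀ i, S → Set (X i)), IsRealization c X f →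
    box f w ⊆ ⋃ v ∈ V, box f v

/-- `V ⊑ W`: every word of `V` is covered by `W`. -/
def Covered (c : S → S) (V W : Finset (Fin d → S)) : Prop :=
  ∀ v ∈ V, CoveredWord c v W

/-- Equivalent codes: `V ⊑ W` and `W ⊑ V`. -/
def Equivalent (c : S → S) (V W : Finset (Fin d → S)) : Prop :=
  Covered c V W ∧ Covered c W V

/-- `V ⊑̇ W`: `V ⊑ W` and no word of `V` belongs to any code obtained from `W`
by gluing and cutting. -/
def DotCovered (c : S → S) (V W : Finset (Fin d → S)) : Prop :=
  Covered c V W ∧ ∀ v ∈ V, ∀ W', GC c W W' → v ∉ W'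

/-- The density `δ(V, W)`. -/
noncomputable def delta (c : S → S) (V W : Finset (Fin d → S)) : ℕ∞ :=
  W.inf fun w => ((V.filter fun v => ¬ Dich c v w).card : ℕ∞)

/-- `C` is a minimal cover of the word `w`. -/
def MinCoverWord (c : S → S) (C : Finset (Fin d → S)) (w : Fin d → S) : Prop :=
  IsCode c C ∧ CoveredWord c w C ∧ ∀ q ∈ C, ¬ Dich c q w

/-- `C` is a minimal cover of the code `P`. -/
def MinCoverCode (c : S → S) (C P : Finset (Fin d → S)) : Prop :=
  IsCode c C ∧ Covered c P C ∧ ∀ q ∈ C, ∃ p ∈ P, ¬ Dich c q p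

/-- A simple polybox code. -/
def SimpleCode (c : S → S) (V : Finset (Fin d → S)) : Prop :=
  ∀ i : Fin d, ∃ s : S, ∀ v ∈ V, v i = s ∨ v i = c s

/-- A simple cube tiling code `{s₁, s₁'} × ⋯ × {s_d, s_d'}`. -/
def SimpleCubeTiling (c : S → S) (U : Finset (Fin d → S)) : Prop :=
  ∃ s : Fin d → S, ∀ v : Fin d → S, v ∈ U ↔ ∀ i, v i = s i ∨ v i = c (s i)

/-- Word whose first four coordinates are `x0 x1 x2 x3` and which agrees with
`r` elsewhere. -/
def specialWord (r : Fin d → S) (x0 x1 x2 x3 : S) : Fin d → S := fun i =>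
  if (i : ℕ) = 0 then x0 else if (i : ℕ) = 1 then x1 else if (i : ℕ) = 2 then x2
  else if (i : ℕ) = 3 then x3 else r i

/-- The special pair of 12-word codes (Theorem 1 of the paper). -/
def SpecialPair (c : S → S) (V W : Finset (Fin d → S)) : Prop :=
  ∃ (a b : S) (r : Fin d → S), a ≠ b ∧ a ≠ c b ∧
    V = {specialWord r a (c a) b (c b), specialWord r a b (c b) a,
         specialWord r a (c b) (c b) (c b), specialWord r (c a) a (c b) (c b),
         specialWord r (c a) (c a) a (c b), specialWord r (c a) b (c b) b,
         specialWord r b a b (c b), specialWord r b b b b,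
         specialWord r b (c b) (c a) b, specialWord r (c b) a b (c a),
         specialWord r (c b) (c a) b b, specialWord r (c b) (c b) (c b) b} ∧
    W = {specialWord r (c a) (c a) (c a) b, specialWord r (c a) b a (c a),
         specialWord r b a (c a) a, specialWord r a (c a) (c a) a,
         specialWord r (c a) a (c a) (c a), specialWord r a b b (c a),
         specialWord r b b a a, specialWord r a (c b) (c a) (c a),
         specialWord r (c b) a (c b) a, specialWord r (c b) (c a) a a,
         specialWord r (c b) (c b) a (c a), specialWord r b (c b) a (c b)}

/-- An isomorphism of `S^d`: a permutation of coordinates followed by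
position bijections commuting with complementation. -/
def IsIso (c : S → S) (Φ : (Fin d → S) → Fin d → S) : Prop :=
  ∃ (σ : Equiv.Perm (Fin d)) (h : Fin d → S → S),
    (∀ i, Function.Bijective (h i)) ∧ (∀ i s, h i (c s) = c (h i s)) ∧
    ∀ v i, Φ v i = h i (v (σ i))

/-- The pair `(V, W)` is, up to isomorphism, the special pair. -/
def SpecialPairUpToIso (c : S → S) (V W : Finset (Fin d → S)) : Prop :=
  ∃ Φ, IsIso c Φ ∧
    (SpecialPair c (V.image Φ) (W.image Φ) ∨ SpecialPair c (W.image Φ) (V.image Φ))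

/-!
Equivalent codes cover the same points of the universal realization, whose points choose one letter
of every complementary pair in every coordinate; gluing and cutting preserves the covered set.

In dimension three, covering the same set already implies strong equivalence. Let `w` be a word of
`W` and choose, among the codes obtained from `V` by gluing and cutting, one with the fewest words
meeting `w`. If `w` is not in it, a parity argument on the points obtained from a given one by
exchanging letters shows that it contains a word `v` differing from `w` in every letter, together
with its complement `c ∘ v` and three words, the rods of `v`, winding around them. Any further word
would be the twin of a rod, and then the number of words meeting `w` could be reduced. But every
word dichotomous to `w` meets the twin of some rod, and the boxes of these twins are disjoint from
the five boxes, so `W = {w}`, although the box of `v` is not contained in that of `w`. Hence `w` can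
be moved into `V` by gluing and cutting and then removed from both codes.

A code with `2 ^ d - 1` words extends to a cube tiling code by one word `s`: since the number of
words is odd, every coordinate has a letter occurring less often than its complement, and these
letters form `s`. So the set covered by `V` is the complement of a box and depends in the first
coordinate only on the choice between `s 0` and its complement. For any other letter `k` the layers
of `V` at `k` and at `c k` then cover the same set, and by the three-dimensional case one can be
turned into the other and the resulting twin pairs recut to the letters `s 0` and `c (s 0)`. Once
only these two letters occur in the first coordinate of `V` and of `W`, the corresponding layers
cover the same sets, and the three-dimensional case applies again.
-/

open Function Finset

/-- A choice of one letter from every complementary pair. A `d`-tuple of selectors is a point of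
the universal realization, in which a letter `s` stands for the set of all selectors choosing it. -/
structure Selector {α : Type} (c : α → α) where
  chooses : α → Bool
  chooses_compl : ∀ s, chooses (c s) = !chooses s

instance {α : Type} (c : α → α) : CoeFun (Selector c) fun _ => α → Bool :=
  ⟨Selector.chooses⟩

namespace Selector

variable {α : Type} {c : α → α}

theorem exists_chooses (hc : Involutive c) (hc' : ∀ s, c s ≠ s) (s : α) :
    ∃ e : Selector c, e s := by
  classical
  let _ : LinearOrder α := IsWellOrder.linearOrder WellOrderingRel
  have not_lt_iff (t : α) : ¬ t < c t ↔ c t < t := not_lt.trans (hc' t).le_iff_lt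
  let e : Selector c := ⟨fun t => decide (t < c t), fun t => by
    simp only [hc t, ← decide_not, not_lt_iff]⟩
  let e' : Selector c := ⟨fun t => !e t, fun t => by rw [e.chooses_compl]⟩
  by_cases hs : e s
  · exact ⟨e, hs⟩
  · exact ⟨e', by simpa [e'] using hs⟩

/-- The selector that differs from `e` exactly on the pair `{k, c k}`. -/
def flip [DecidableEq α] (hc : Involutive c) (e : Selector c) (k : α) : Selector c where
  chooses s := if s = k ∨ s = c k then !e s else e s
  chooses_compl s := by
    have : (c s = k ∨ c s = c k) ↔ (s = k ∨ s = c k) := by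
      rw [hc.injective.eq_iff, hc.eq_iff, or_comm]
    simp only [this, e.chooses_compl]
    split_ifs <;> rfl

theorem flip_apply_of_mem [DecidableEq α] (hc : Involutive c) (e : Selector c) {k s : α}
    (h : s = k ∨ s = c k) : e.flip hc k s = !e s :=
  if_pos h

theorem flip_apply_of_notMem [DecidableEq α] (hc : Involutive c) (e : Selector c) {k s : α}
    (h : ¬ (s = k ∨ s = c k)) : e.flip hc k s = e s :=
  if_neg h

theorem exists_chooses_chooses (hc : Involutive c) (hc' : ∀ s, c s ≠ s) {s t : α} (h : t ≠ c s) :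
    ∃ e : Selector c, e s ∧ e t := by
  classical
  obtain ⟨e, hs⟩ := exists_chooses hc hc' s
  by_cases ht : e t
  · exact ⟨e, hs, ht⟩
  have hst : ¬ (s = t ∨ s = c t) := by
    rintro (rfl | rfl)
    · exact ht hs
    · exact h (hc t).symm
  refine ⟨e.flip hc t, ?_, ?_⟩
  · rwa [flip_apply_of_notMem hc e hst]
  · simpa [flip_apply_of_mem hc e (.inl rfl)] using ht

end Selector

theorem Dich.symm {α : Type} {c : α → α} (hc : Involutive c) {d : ℕ} {v w : Fin d → α}
    (h : Dich c v w) : Dich c w v :=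
  h.imp fun _ hi => hc.eq_iff.1 hi.symm

section Boxes

variable {α : Type} {c : α → α} {d : ℕ} {V W U : Finset (Fin d → α)} {v w : Fin d → α}

/-- The point `x` of the universal realization lies in the box of the word `v`. -/
def MemBox (x : Fin d → Selector c) (v : Fin d → α) : Prop :=
  ∀ i, x i (v i)

/-- The point `x` of the universal realization lies in the union of the boxes of `V`. -/
def Covers (V : Finset (Fin d → α)) (x : Fin d → Selector c) : Prop :=
  ∃ v ∈ V, MemBox x v

variable (c) in
/-- The boxes of `V` and of `W` have the same union in the universal realization. -/
def SameUnion (V W : Finset (Fin d → α)) : Prop :=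
  ∀ x : Fin d → Selector c, Covers V x ↔ Covers W x

theorem SameUnion.symm (h : SameUnion c V W) : SameUnion c W V :=
  fun x => (h x).symm

theorem SameUnion.trans (h : SameUnion c U V) (h' : SameUnion c V W) : SameUnion c U W :=
  fun x => (h x).trans (h' x)

theorem exists_memBox_memBox (hc : Involutive c) (hc' : ∀ s, c s ≠ s) (h : ¬ Dich c v w) :
    ∃ x : Fin d → Selector c, MemBox x v ∧ MemBox x w := by
  classical
  choose x hx using fun i =>
    Selector.exists_chooses_chooses hc hc' (s := w i) (t := v i) fun hi => h ⟨i, hi⟩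
  exact ⟨x, fun i => (hx i).2, fun i => (hx i).1⟩

theorem not_dich_self (hc' : ∀ s, c s ≠ s) (v : Fin d → α) : ¬ Dich c v v :=
  fun ⟨i, hi⟩ => hc' (v i) hi.symm

theorem MemBox.not_dich {x : Fin d → Selector c} (hv : MemBox x v) (hw : MemBox x w) :
    ¬ Dich c v w := fun ⟨i, hi⟩ => by
  simpa [hi, (x i).chooses_compl, hw i] using hv i

theorem IsCode.eq_of_memBox (hV : IsCode c V) (hv : v ∈ V) (hw : w ∈ V) {x : Fin d → Selector c}
    (hxv : MemBox x v) (hxw : MemBox x w) : v = w :=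
  by_contra fun hne => hxv.not_dich hxw (hV v hv w hw hne)

theorem SameUnion.exists_not_dich (hc : Involutive c) (hc' : ∀ s, c s ≠ s) (h : SameUnion c V W)
    (hw : w ∈ W) (hvw : ¬ Dich c v w) : ∃ u ∈ V, ¬ Dich c v u := by
  obtain ⟨x, hxv, hxw⟩ := exists_memBox_memBox hc hc' hvw
  obtain ⟨u, hu, hxu⟩ := (h x).2 ⟨w, hw, hxw⟩
  exact ⟨u, hu, hxv.not_dich hxu⟩

theorem SameUnion.eq_empty (hc : Involutive c) (hc' : ∀ s, c s ≠ s) (h : SameUnion c V ∅) :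
    V = ∅ :=
  eq_empty_of_forall_notMem fun v hv => by
    obtain ⟨u, hu, -⟩ := h.symm.exists_not_dich hc hc' hv (not_dich_self hc' v)
    exact notMem_empty u hu

theorem Covered.covers (hc : Involutive c) (hc' : ∀ s, c s ≠ s) (h : Covered c V W)
    {x : Fin d → Selector c} (hx : Covers V x) : Covers W x := by
  obtain ⟨v, hv, hxv⟩ := hx
  have hf : IsRealization c (fun _ : Fin d => Selector c) fun _ s => {e | e s} := fun _ s => by
    obtain ⟨e, he⟩ := Selector.exists_chooses hc hc' s
    obtain ⟨e', he'⟩ := Selector.exists_chooses hc hc' (c s)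
    refine ⟨⟨e, he⟩, fun hs => ?_, ?_⟩
    · have : e' s := hs.ge (Set.mem_univ e')
      simp [e'.chooses_compl, this] at he'
    · ext e
      simp [e.chooses_compl]
  simpa [box, Covers, MemBox] using h v hv _ _ hf hxv

theorem Equivalent.sameUnion (hc : Involutive c) (hc' : ∀ s, c s ≠ s) (h : Equivalent c V W) :
    SameUnion c V W :=
  fun _ => ⟨h.1.covers hc hc', h.2.covers hc hc'⟩

end Boxes

section GlueAndCut

variable {α : Type} {c : α → α} {d : ℕ} {u v : Fin d → α} {i : Fin d}

theorem exists_ne_of_dich_of_dich_update (hc : Involutive c) (hc' : ∀ s, c s ≠ s)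
    (h : Dich c u v) (h' : Dich c u (update v i (c (v i)))) : ∃ j ≠ i, u j = c (v j) := by
  obtain ⟨j, hj⟩ := h
  obtain ⟨k, hk⟩ := h'
  by_cases hki : k = i
  · subst hki
    refine ⟨j, ?_, hj⟩
    rintro rfl
    rw [update_self, hc] at hk
    exact hc' (v j) (hj.symm.trans hk)
  · exact ⟨k, hki, by rwa [update_of_ne hki] at hk⟩

theorem dich_update_of_ne {j : Fin d} (hji : j ≠ i) (h : u j = c (v j)) (s : α) :
    Dich c u (update v i s) :=
  ⟨j, by rwa [update_of_ne hji]⟩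

theorem TwinPair.eq_update (h : TwinPair c u v i) : u = update v i (c (v i)) :=
  eq_update_iff.2 h

theorem memBox_update_or {x : Fin d → Selector c} (v : Fin d → α) (i : Fin d) (s : α) :
    MemBox x (update v i s) ∨ MemBox x (update v i (c s)) ↔ ∀ j ≠ i, x j (v j) := by
  have memBox_iff (t : α) : MemBox x (update v i t) ↔ x i t ∧ ∀ j ≠ i, x j (v j) :=
    forall_update_iff v fun j a => (x j a : Prop)
  rw [memBox_iff, memBox_iff, ← or_and_right, (x i).chooses_compl]
  cases x i s <;> simp

variable [DecidableEq α] {V W U : Finset (Fin d → α)}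

theorem gcStep_iff (hc : Involutive c) : GCStep c V W ↔ ∃ v i s, v ∈ V ∧
    update v i (c (v i)) ∈ V ∧
    W = V \ {v, update v i (c (v i))} ∪ {update v i s, update v i (c s)} := by
  constructor
  · rintro ⟨v, w, q, t, i, hv, hw, ⟨hvi, hvw⟩, ⟨hqi, hqt⟩, hqv, rfl⟩
    have hw_eq : w = update v i (c (v i)) :=
      eq_update_iff.2 ⟨by rw [hvi, hc], fun j hj => (hvw j hj).symm⟩
    have hq_eq : q = update v i (q i) := eq_update_iff.2 ⟨rfl, hqv⟩
    have ht_eq : t = update v i (c (q i)) :=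
      eq_update_iff.2 ⟨by rw [hqi, hc], fun j hj => by rw [← hqt j hj, hqv j hj]⟩
    exact ⟨v, i, q i, hv, hw_eq ▸ hw, by rw [← hw_eq, ← hq_eq, ← ht_eq]⟩
  · rintro ⟨v, i, s, hv, hw, rfl⟩
    refine ⟨v, _, _, _, i, hv, hw, ⟨?_, ?_⟩, ⟨?_, ?_⟩, ?_, rfl⟩ <;> simp +contextual [hc _]

theorem GCStep.sameUnion (hc : Involutive c) (h : GCStep c V W) : SameUnion c V W := by
  obtain ⟨v, i, s, hv, hv', rfl⟩ := (gcStep_iff hc).1 h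
  intro x
  have hpair : MemBox x v ∨ MemBox x (update v i (c (v i))) ↔
      MemBox x (update v i s) ∨ MemBox x (update v i (c s)) := by
    rw [memBox_update_or, ← memBox_update_or v i (v i), update_eq_self]
  have hV : V = V \ {v, update v i (c (v i))} ∪ {v, update v i (c (v i))} :=
    (sdiff_union_of_subset (by simp [insert_subset_iff, hv, hv'])).symm
  conv_lhs => rw [hV]
  simp only [Covers, mem_union, mem_insert, mem_singleton, or_and_right, exists_or,
    exists_eq_left, hpair]

theorem GCStep.isCode (hc : Involutive c) (hc' : ∀ s, c s ≠ s) (h : GCStep c V W)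
    (hV : IsCode c V) : IsCode c W := by
  obtain ⟨v, i, s, hv, hv', rfl⟩ := (gcStep_iff hc).1 h
  have hrest : ∀ u ∈ V \ {v, update v i (c (v i))}, ∀ t, Dich c u (update v i t) := by
    intro u hu t
    simp only [mem_sdiff, mem_insert, mem_singleton, not_or] at hu
    obtain ⟨j, hji, hj⟩ := exists_ne_of_dich_of_dich_update hc hc'
      (hV u hu.1 v hv hu.2.1) (hV u hu.1 _ hv' hu.2.2)
    exact dich_update_of_ne hji hj t
  have hpair : Dich c (update v i s) (update v i (c s)) := ⟨i, by simp [hc s]⟩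
  intro p hp q hq hpq
  simp only [mem_union, mem_insert, mem_singleton] at hp hq
  rcases hp with hp | rfl | rfl <;> rcases hq with hq | rfl | rfl
  · exact hV p (mem_sdiff.1 hp).1 q (mem_sdiff.1 hq).1 hpq
  · exact hrest p hp _
  · exact hrest p hp _
  · exact (hrest q hq _).symm hc
  · exact absurd rfl hpq
  · exact hpair
  · exact (hrest q hq _).symm hc
  · exact hpair.symm hc
  · exact absurd rfl hpq

theorem GCStep.symm (hc : Involutive c) (hc' : ∀ s, c s ≠ s) (h : GCStep c V W)
    (hV : IsCode c V) : GCStep c W V := by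
  obtain ⟨v, i, s, hv, hv', rfl⟩ := (gcStep_iff hc).1 h
  have hnew : Disjoint (V \ {v, update v i (c (v i))}) {update v i s, update v i (c s)} := by
    rw [Finset.disjoint_right]
    intro q hq hqV
    simp only [mem_sdiff, mem_insert, mem_singleton, not_or] at hq hqV
    obtain ⟨j, hji, hj⟩ := exists_ne_of_dich_of_dich_update hc hc'
      (hV q hqV.1 v hv hqV.2.1) (hV q hqV.1 _ hv' hqV.2.2)
    rcases hq with rfl | rfl <;>
    · rw [update_of_ne hji] at hj
      exact hc' _ hj.symm
  refine (gcStep_iff hc).2 ⟨update v i s, i, v i, by simp, by simp, ?_⟩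
  rw [update_idem, update_idem, update_idem, update_self, update_eq_self,
    union_sdiff_cancel_right hnew, sdiff_union_of_subset]
  simp [insert_subset_iff, hv, hv']

theorem GCStep.card_le (hc : Involutive c) (hc' : ∀ s, c s ≠ s) (h : GCStep c V W) :
    #W ≤ #V := by
  obtain ⟨v, i, s, hv, hv', rfl⟩ := (gcStep_iff hc).1 h
  have hne : v ≠ update v i (c (v i)) := fun h => hc' (v i) (by simpa using (congrFun h i).symm)
  calc #(V \ {v, update v i (c (v i))} ∪ {update v i s, update v i (c s)})
      ≤ #(V \ {v, update v i (c (v i))}) + 2 :=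
        (card_union_le _ _).trans (Nat.add_le_add_left card_le_two _)
    _ = #(V \ {v, update v i (c (v i))}) + #{v, update v i (c (v i))} := by rw [card_pair hne]
    _ = #V := card_sdiff_add_card_eq_card (by simp [insert_subset_iff, hv, hv'])

theorem GC.isCode (hc : Involutive c) (hc' : ∀ s, c s ≠ s) (h : GC c V W) (hV : IsCode c V) :
    IsCode c W := by
  induction h with
  | refl => exact hV
  | tail _ h ih => exact h.isCode hc hc' ih

theorem GC.sameUnion (hc : Involutive c) (h : GC c V W) : SameUnion c V W := by
  induction h with
  | refl => exact fun _ => Iff.rfl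
  | tail _ h ih => exact ih.trans (h.sameUnion hc)

theorem GC.card_le (hc : Involutive c) (hc' : ∀ s, c s ≠ s) (h : GC c V W) : #W ≤ #V := by
  induction h with
  | refl => exact le_rfl
  | tail _ h ih => exact (h.card_le hc hc').trans ih

theorem GC.symm (hc : Involutive c) (hc' : ∀ s, c s ≠ s) (h : GC c V W) (hV : IsCode c V) :
    GC c W V := by
  induction h with
  | refl => exact .refl
  | tail h₁ h₂ ih => exact .head (h₂.symm hc hc' (GC.isCode hc hc' h₁ hV)) ih

theorem GCStep.union_right (hc : Involutive c) (h : GCStep c V W) (hVU : Disjoint V U) :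
    GCStep c (V ∪ U) (W ∪ U) := by
  obtain ⟨v, i, s, hv, hv', rfl⟩ := (gcStep_iff hc).1 h
  refine (gcStep_iff hc).2 ⟨v, i, s, mem_union_left _ hv, mem_union_left _ hv', ?_⟩
  have hU : U \ {v, update v i (c (v i))} = U :=
    sdiff_eq_self_of_disjoint (hVU.symm.mono_right (by simp [insert_subset_iff, hv, hv']))
  rw [union_sdiff_distrib, hU, union_right_comm]

theorem SameUnion.disjoint (hc : Involutive c) (hc' : ∀ s, c s ≠ s) (h : SameUnion c V W)
    (hVU : IsCode c (V ∪ U)) (hdisj : Disjoint V U) : Disjoint W U := by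
  rw [Finset.disjoint_left]
  intro w hw hwU
  obtain ⟨x, hx, -⟩ := exists_memBox_memBox hc hc' (not_dich_self hc' w)
  obtain ⟨v, hv, hxv⟩ := (h x).2 ⟨w, hw, hx⟩
  have hvw := hVU.eq_of_memBox (mem_union_left _ hv) (mem_union_right _ hwU) hxv hx
  exact Finset.disjoint_left.1 hdisj hv (hvw ▸ hwU)

theorem GC.union_right (hc : Involutive c) (hc' : ∀ s, c s ≠ s) (h : GC c V W)
    (hVU : IsCode c (V ∪ U)) (hdisj : Disjoint V U) : GC c (V ∪ U) (W ∪ U) := by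
  induction h with
  | refl => exact .refl
  | tail h₁ h₂ ih =>
    exact ih.tail (h₂.union_right hc ((GC.sameUnion hc h₁).disjoint hc hc' hVU hdisj))

end GlueAndCut

section OddFlip

variable {α : Type} [DecidableEq α] {c : α → α} {d : ℕ} {V : Finset (Fin d → α)}
  {v w : Fin d → α}

instance {α : Type} {c : α → α} {d : ℕ} (x : Fin d → Selector c) (v : Fin d → α) :
    Decidable (MemBox x v) :=
  Fintype.decidableForallFintype (p := fun i => (x i (v i) : Prop))

/-- The point `x` with the selectors at the positions in `J` flipped at the letters of `v`. -/
def flipAt (hc : Involutive c) (x : Fin d → Selector c) (v : Fin d → α) (J : Finset (Fin d)) :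
    Fin d → Selector c :=
  J.piecewise (fun i => (x i).flip hc (v i)) x

theorem MemBox.flipAt (hc : Involutive c) {x : Fin d → Selector c} (hx : MemBox x w)
    (hvw : ¬ Dich c v w) {J : Finset (Fin d)} (hne : ∀ i ∈ J, v i ≠ w i) :
    MemBox (flipAt hc x v J) w := by
  intro i
  by_cases hi : i ∈ J
  · have hwv : ¬ (w i = v i ∨ w i = c (v i)) := by
      rintro (h | h)
      · exact hne i hi h.symm
      · exact hvw ⟨i, hc.eq_iff.1 h.symm⟩
    simpa [PolyboxPaper.flipAt, hi, Selector.flip_apply_of_notMem hc _ hwv] using hx i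
  · simpa [PolyboxPaper.flipAt, hi] using hx i

theorem prod_mul_prod_sub_eq_sum_flipAt (hc : Involutive c) (x : Fin d → Selector c)
    (v u : Fin d → α) (I : Finset (Fin d)) :
    ((∏ i ∈ univ \ I, if x i (u i) then 1 else 0) *
      ∏ i ∈ I, ((if x i (u i) then 1 else 0) - if (x i).flip hc (v i) (u i) then 1 else 0) : ℤ) =
    ∑ J ∈ I.powerset, (-1) ^ #J * if MemBox (flipAt hc x v J) u then 1 else 0 := by
  rw [prod_sub, mul_sum]
  refine sum_congr rfl fun J hJ => ?_
  have hJI := mem_powerset.1 hJ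
  have hdisj : Disjoint (univ \ I) (I \ J) := disjoint_sdiff_self_left.mono_right sdiff_subset
  calc _ = (-1) ^ #J * ((∏ i ∈ univ \ J, if x i (u i) then (1 : ℤ) else 0) *
        ∏ i ∈ J, if (x i).flip hc (v i) (u i) then 1 else 0) := by
        rw [← sdiff_union_sdiff_cancel (subset_univ I) hJI, prod_union hdisj]
        ring
    _ = (-1) ^ #J * ∏ i, if flipAt hc x v J i (u i) then 1 else 0 := by
        rw [← prod_sdiff (subset_univ J)]
        congr 2
        · exact prod_congr rfl fun i hi => by simp [flipAt, (mem_sdiff.1 hi).2]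
        · exact prod_congr rfl fun i hi => by simp [flipAt, hi]
    _ = _ := by rw [Fintype.prod_boole]; rfl

theorem indicator_sub_indicator_flip (hc : Involutive c) (hc' : ∀ s, c s ≠ s) {e : Selector c}
    {k : α} (hk : e k) (s : α) :
    ((if e s then 1 else 0) - if e.flip hc k s then 1 else 0 : ℤ) =
      if s = k ∨ s = c k then if s = c k then -1 else 1 else 0 := by
  by_cases h : s = k ∨ s = c k
  · rw [Selector.flip_apply_of_mem hc e h, if_pos h]
    rcases h with rfl | rfl
    · simp [hk, (hc' s).symm]
    · simp [hk, e.chooses_compl]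
  · rw [Selector.flip_apply_of_notMem hc e h, if_neg h, sub_self]

/-- Flipping `x` at the letters of `v` in all possible ways yields points each covered by exactly
one word, so the alternating sum over all flips of the number of covering words vanishes. Summing
over the flips first, every word of `V` contributes `1`, `-1` or `0`. -/
theorem sum_neg_one_pow_card_flip_eq_zero (hc : Involutive c) (hc' : ∀ s, c s ≠ s)
    (hV : IsCode c V) {x : Fin d → Selector c} (hxv : MemBox x v) {I : Finset (Fin d)}
    (hI : I.Nonempty) (hcov : ∀ J ⊆ I, Covers V (flipAt hc x v J)) :
    ∑ u ∈ V with (∀ i ∈ univ \ I, x i (u i)) ∧ ∀ i ∈ I, u i = v i ∨ u i = c (v i),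
      (-1 : ℤ) ^ #{i ∈ I | u i = c (v i)} = 0 := by
  have hone (J : Finset (Fin d)) (hJ : J ∈ I.powerset) :
      ∑ u ∈ V, (if MemBox (flipAt hc x v J) u then 1 else 0 : ℤ) = 1 := by
    obtain ⟨u, hu, hxu⟩ := hcov J (mem_powerset.1 hJ)
    rw [sum_eq_single_of_mem u hu fun u' hu' hne =>
      if_neg fun hxu' => hne (hV.eq_of_memBox hu' hu hxu' hxu), if_pos hxu]
  calc _ = ∑ u ∈ V, ((∏ i ∈ univ \ I, if x i (u i) then 1 else 0) *
        ∏ i ∈ I, ((if x i (u i) then 1 else 0) -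
          if (x i).flip hc (v i) (u i) then 1 else 0) : ℤ) := by
        rw [sum_filter]
        refine sum_congr rfl fun u _ => ?_
        simp only [indicator_sub_indicator_flip hc hc' (hxv _), prod_boole, prod_ite_zero, prod_ite,
          prod_const, one_pow, mul_one, ite_and, ite_mul, one_mul, zero_mul]
    _ = ∑ J ∈ I.powerset, (-1) ^ #J *
        ∑ u ∈ V, if MemBox (flipAt hc x v J) u then 1 else 0 := by
        simp only [prod_mul_prod_sub_eq_sum_flipAt, mul_sum]
        exact sum_comm
    _ = ∑ J ∈ I.powerset, (-1) ^ #J := sum_congr rfl fun J hJ => by rw [hone J hJ, mul_one]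
    _ = 0 := sum_powerset_neg_one_pow_card_of_nonempty hI

theorem exists_odd_flip (hc : Involutive c) (hc' : ∀ s, c s ≠ s) (hV : IsCode c V) (hv : v ∈ V)
    (hvw : ¬ Dich c v w) (hcov : ∀ x : Fin d → Selector c, MemBox x w → Covers V x)
    {I : Finset (Fin d)} (hI : I.Nonempty) (hne : ∀ i ∈ I, v i ≠ w i) :
    ∃ u ∈ V, ¬ Dich c u w ∧ (∀ i ∈ I, u i = v i ∨ u i = c (v i)) ∧
      Odd #{i ∈ I | u i = c (v i)} := by
  obtain ⟨x, hxv, hxw⟩ := exists_memBox_memBox hc hc' hvw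
  have hsum := sum_neg_one_pow_card_flip_eq_zero hc hc' hV hxv hI
    fun J hJ => hcov _ (hxw.flipAt hc hvw fun i hi => hne i (hJ hi))
  by_contra! hodd
  refine (sum_pos (fun u hu => ?_)
    ⟨v, mem_filter.2 ⟨hv, fun i _ => hxv i, fun i _ => .inl rfl⟩⟩).ne' hsum
  obtain ⟨huV, hout, hin⟩ := mem_filter.1 hu
  have huw : ¬ Dich c u w := by
    rintro ⟨i, hi⟩
    by_cases hiI : i ∈ I
    · rcases hin i hiI with h | h
      · exact hvw ⟨i, h ▸ hi⟩
      · exact hne i hiI (hc.injective (h ▸ hi))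
    · simpa [hi, (x i).chooses_compl, hxw i] using hout i (by simp [hiI])
  rw [(Nat.not_odd_iff_even.1 (hodd u huV huw hin)).neg_one_pow]
  exact one_pos

end OddFlip

section MinimalMeeting

variable {α : Type} [DecidableEq α] {c : α → α} {d : ℕ} {V W : Finset (Fin d → α)}
  {u v w : Fin d → α} {i : Fin d}

/-- The words of `V` whose boxes meet the box of `w`. -/
def meeting (c : α → α) (V : Finset (Fin d → α)) (w : Fin d → α) : Finset (Fin d → α) :=
  {v ∈ V | ¬ Dich c v w}

theorem mem_meeting : u ∈ meeting c V w ↔ u ∈ V ∧ ¬ Dich c u w :=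
  mem_filter

/-- `V` has the fewest words meeting `w` among all codes obtained from it by gluing and cutting. -/
def MinimalMeeting (c : α → α) (V : Finset (Fin d → α)) (w : Fin d → α) : Prop :=
  ∀ W, GC c V W → #(meeting c V w) ≤ #(meeting c W w)

theorem exists_gc_minimalMeeting (c : α → α) (V : Finset (Fin d → α)) (w : Fin d → α) :
    ∃ W, GC c V W ∧ MinimalMeeting c W w := by
  obtain ⟨W, hVW, hmin⟩ :=
    exists_minimalFor_of_wellFoundedLT (GC c V) (fun W => #(meeting c W w)) ⟨V, .refl⟩
  exact ⟨W, hVW, fun U hWU => (le_total _ _).elim id (hmin (hVW.trans hWU))⟩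

theorem card_meeting_union_le (V W : Finset (Fin d → α)) (w : Fin d → α) :
    #(meeting c (V ∪ W) w) ≤ #(meeting c V w) + #(meeting c W w) := by
  rw [meeting, filter_union]
  exact card_union_le _ _

theorem meeting_sdiff (V W : Finset (Fin d → α)) (w : Fin d → α) :
    meeting c (V \ W) w = meeting c V w \ W := by
  ext u
  simp only [mem_meeting, mem_sdiff, and_right_comm]

theorem exists_gcStep_card_meeting_le_succ (hc : Involutive c) (hv : v ∈ V)
    (hv' : update v i (c (v i)) ∈ V) (hvw : ¬ Dich c v w) (s : α) :
    ∃ W, GCStep c V W ∧ #(meeting c W w) ≤ #(meeting c V w) + 1 ∧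
      V \ {v, update v i (c (v i))} ∪ {update v i s, update v i (c s)} ⊆ W := by
  refine ⟨_, (gcStep_iff hc).2 ⟨v, i, s, hv, hv', rfl⟩, ?_, Subset.rfl⟩
  have hrest : #(meeting c (V \ {v, update v i (c (v i))}) w) < #(meeting c V w) := by
    rw [meeting_sdiff]
    exact card_lt_card <|
      (ssubset_iff_of_subset sdiff_subset).2 ⟨v, mem_meeting.2 ⟨hv, hvw⟩, by simp⟩
  have hnew : #(meeting c {update v i s, update v i (c s)} w) ≤ 2 :=
    (card_filter_le _ _).trans card_le_two
  have := card_meeting_union_le (c := c) (V \ {v, update v i (c (v i))})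
    {update v i s, update v i (c s)} w
  lia

theorem exists_gcStep_card_meeting_lt (hc : Involutive c) (hc' : ∀ s, c s ≠ s) (hv : v ∈ V)
    (hu : u ∈ V) (huv : TwinPair c u v i) (hvw : ¬ Dich c v w) (hne : v i ≠ w i) :
    ∃ W, GCStep c V W ∧ #(meeting c W w) < #(meeting c V w) ∧ V \ {v, u} ⊆ W := by
  obtain rfl := huv.eq_update
  refine ⟨_, (gcStep_iff hc).2 ⟨v, i, w i, hv, hu, rfl⟩, ?_, subset_union_left⟩
  have hv'w : ¬ Dich c (update v i (c (v i))) w := by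
    rintro ⟨j, hj⟩
    by_cases hji : j = i
    · subst hji
      exact hne (hc.injective (by simpa using hj))
    · exact hvw ⟨j, by simpa [hji] using hj⟩
  have hvv' : v ≠ update v i (c (v i)) := fun h => hc' (v i) (by simpa using (congrFun h i).symm)
  have hsub : {v, update v i (c (v i))} ⊆ meeting c V w := by
    simp [insert_subset_iff, mem_meeting, hv, hu, hvw, hv'w]
  have hrest : #(meeting c (V \ {v, update v i (c (v i))}) w) + 2 = #(meeting c V w) := by
    rw [meeting_sdiff, ← card_pair hvv', card_sdiff_add_card_eq_card hsub]
  have hnew : #(meeting c {update v i (w i), update v i (c (w i))} w) ≤ 1 := by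
    have hdich : Dich c (update v i (c (w i))) w := ⟨i, update_self ..⟩
    rw [meeting, filter_insert, filter_singleton, if_neg (not_not.2 hdich)]
    split_ifs <;> simp
  have := card_meeting_union_le (c := c) (V \ {v, update v i (c (v i))})
    {update v i (w i), update v i (c (w i))} w
  lia

theorem MinimalMeeting.not_twinPair (hc : Involutive c) (hc' : ∀ s, c s ≠ s)
    (hmin : MinimalMeeting c V w) (hv : v ∈ V) (hvw : ¬ Dich c v w) (hne : v i ≠ w i)
    (hu : u ∈ V) : ¬ TwinPair c u v i := fun h => by
  obtain ⟨W, hVW, hlt, -⟩ := exists_gcStep_card_meeting_lt hc hc' hv hu h hvw hne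
  exact (hmin W (.single hVW)).not_gt hlt

end MinimalMeeting

section DimensionThree

variable {α : Type} {c : α → α} {u u' v w : Fin 3 → α} {i j : Fin 3}

theorem forall_fin_three_cyclic {p : Fin 3 → Prop} (i : Fin 3) :
    (∀ j, p j) ↔ p i ∧ p (i + 1) ∧ p (i + 2) :=
  ⟨fun h => ⟨h _, h _, h _⟩, fun ⟨h₀, h₁, h₂⟩ j => by
    obtain rfl | rfl | rfl : j = i ∨ j = i + 1 ∨ j = i + 2 := by lia
    exacts [h₀, h₁, h₂]⟩

theorem fin_three_cyclic_add (i : Fin 3) :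
    i + 1 + 1 = i + 2 ∧ i + 1 + 2 = i ∧ i + 2 + 1 = i ∧ i + 2 + 2 = i + 1 := by
  lia

theorem dich_iff_cyclic (i : Fin 3) : Dich c u v ↔
    u i = c (v i) ∨ u (i + 1) = c (v (i + 1)) ∨ u (i + 2) = c (v (i + 2)) := by
  rw [← not_iff_not, Dich, not_exists, forall_fin_three_cyclic i]
  tauto

/-- `u` runs in the `i`-th direction through the edges joining `v` to its complement `c ∘ v`: it
picks neither letter of `v` and of `c ∘ v` at `i`, follows `v` at `i + 1` and `c ∘ v` at `i + 2`
(cyclically). -/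
def IsRod (c : α → α) (v : Fin 3 → α) (i : Fin 3) (u : Fin 3 → α) : Prop :=
  u i ≠ v i ∧ u i ≠ c (v i) ∧ u (i + 1) = v (i + 1) ∧ u (i + 2) = c (v (i + 2))

theorem IsRod.not_isRod_succ (hc : Involutive c) (hc' : ∀ s, c s ≠ s) {V : Finset (Fin 3 → α)}
    (hV : IsCode c V) (hu : u ∈ V) (hu' : u' ∈ V) (h : IsRod c v i u) :
    ¬ IsRod c (c ∘ v) (i + 1) u' := by
  rintro ⟨hne₁, -, h₂, h₀⟩
  obtain ⟨e₁, e₂, -, -⟩ := fin_three_cyclic_add i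
  rw [e₁, comp_apply] at h₂
  rw [e₂, comp_apply, hc] at h₀
  have hne : u ≠ u' := fun he => h.1 (he ▸ h₀)
  have hdich := (dich_iff_cyclic i).1 (hV u hu u' hu' hne)
  rw [h.2.2.1, h.2.2.2, h₀, h₂] at hdich
  rcases hdich with h | h | h
  · exact ‹IsRod c v i u›.2.1 h
  · exact hne₁ (hc.eq_iff.1 h.symm)
  · exact hc' _ h.symm

theorem IsRod.not_isRod_comp (hc : Involutive c) (hc' : ∀ s, c s ≠ s) {V : Finset (Fin 3 → α)}
    (hV : IsCode c V) (hu : u ∈ V) (hu' : u' ∈ V) (hij : i ≠ j) (h : IsRod c v i u) :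
    ¬ IsRod c (c ∘ v) j u' := by
  obtain rfl | rfl : j = i + 1 ∨ i = j + 1 := by lia
  · exact h.not_isRod_succ hc hc' hV hu hu'
  · intro h'
    refine h'.not_isRod_succ hc hc' hV hu' hu ?_
    rwa [← comp_assoc, hc.comp_self, id_comp]

theorem IsRod.isRod_comp (hc : Involutive c) (h : IsRod c v i u) :
    IsRod c (c ∘ v) i (c ∘ u) :=
  ⟨hc.injective.ne h.1, hc.injective.ne h.2.1, congrArg c h.2.2.1, congrArg c h.2.2.2⟩

/-- The rod of `v` in the `i`-th direction that agrees with `w` at `i`. -/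
def rod (c : α → α) (w v : Fin 3 → α) (i : Fin 3) : Fin 3 → α :=
  update (update (c ∘ v) (i + 1) (v (i + 1))) i (w i)

/-- The rod of `v` in the `i`-th direction that forms a twin pair with `rod c w v i`. -/
def antirod (c : α → α) (w v : Fin 3 → α) (i : Fin 3) : Fin 3 → α :=
  update (rod c w v i) i (c (w i))

theorem rod_self (i : Fin 3) : rod c w v i i = w i :=
  update_self ..

theorem rod_add_one (i : Fin 3) : rod c w v i (i + 1) = v (i + 1) := by
  rw [rod, update_of_ne (by lia), update_self]

theorem rod_add_two (i : Fin 3) : rod c w v i (i + 2) = c (v (i + 2)) := by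
  rw [rod, update_of_ne (by lia), update_of_ne (by lia), comp_apply]

theorem dich_rod_iff (hc : Involutive c) (i : Fin 3) : Dich c u (rod c w v i) ↔
    u i = c (w i) ∨ u (i + 1) = c (v (i + 1)) ∨ u (i + 2) = v (i + 2) := by
  rw [dich_iff_cyclic i, rod_self, rod_add_one, rod_add_two, hc]

theorem dich_antirod_iff (hc : Involutive c) (i : Fin 3) : Dich c u (antirod c w v i) ↔
    u i = w i ∨ u (i + 1) = c (v (i + 1)) ∨ u (i + 2) = v (i + 2) := by
  rw [dich_iff_cyclic i, antirod, update_self, update_of_ne (by lia), update_of_ne (by lia),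
    rod_add_one, rod_add_two, hc, hc]

theorem dich_rod_antirod (hc : Involutive c) (i j : Fin 3) :
    Dich c (rod c w v j) (antirod c w v i) := by
  obtain ⟨-, -, -, e⟩ := fin_three_cyclic_add i
  rw [dich_antirod_iff hc]
  obtain rfl | h | rfl : j = i ∨ i + 2 = j + 1 ∨ j = i + 2 := by lia
  · exact .inl (rod_self _)
  · exact .inr (.inr (h ▸ rod_add_one j))
  · exact .inr (.inl (e ▸ rod_add_two _))

theorem exists_eq_antirod (hc : Involutive c) (hc' : ∀ s, c s ≠ s) (hvw : ¬ Dich c v w)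
    (hne : ∀ i, v i ≠ w i) (hu : Dich c u v) (hu' : Dich c u (c ∘ v))
    (hrod : ∀ i, Dich c u (rod c w v i)) : ∃ i, u = antirod c w v i := by
  obtain ⟨j, hj⟩ := hu
  obtain ⟨k, hk⟩ := hu'
  rw [comp_apply, hc] at hk
  have hjk : j ≠ k := by
    rintro rfl
    exact hc' _ (hj.symm.trans hk)
  obtain ⟨i, ⟨rfl, rfl⟩ | ⟨rfl, rfl⟩⟩ :
      ∃ i, j = i + 1 ∧ k = i + 2 ∨ j = i + 2 ∧ k = i + 1 := by
    obtain rfl | rfl : k = j + 1 ∨ j = k + 1 := by lia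
    exacts [⟨j + 2, .inl (by lia)⟩, ⟨k + 2, .inr (by lia)⟩]
  · have h₁ := (dich_rod_iff hc _).1 (hrod (i + 1))
    have h₂ := (dich_rod_iff hc _).1 (hrod (i + 2))
    obtain ⟨e₁, e₂, e₃, e₄⟩ := fin_three_cyclic_add i
    rw [e₁, e₂, hj, hk] at h₁
    rw [e₃, e₄, hj, hk] at h₂
    rcases h₁ with h₁ | h₁ | h₁
    · exact absurd (hc.injective h₁) (hne _)
    · exact absurd h₁.symm (hc' _)
    rcases h₂ with h₂ | h₂ | h₂
    · exact absurd ⟨_, h₂⟩ hvw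
    · exact absurd (h₂.symm.trans h₁) (hc' _)
    · exact absurd h₂ (hc' _)
  · have h := (dich_rod_iff hc _).1 (hrod i)
    rw [hj, hk] at h
    have h₀ := h.resolve_right (not_or.2 ⟨(hc' _).symm, hc' _⟩)
    refine ⟨i, funext <| (forall_fin_three_cyclic i).2 ⟨?_, ?_, ?_⟩⟩
    · rw [h₀, antirod, update_self]
    · rw [hk, antirod, update_of_ne (by lia), rod_add_one]
    · rw [hj, antirod, update_of_ne (by lia), rod_add_two]

theorem exists_not_dich_antirod (hc : Involutive c) (hc' : ∀ s, c s ≠ s)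
    (hvw : ¬ Dich c v w) (hne : ∀ i, v i ≠ w i) (hu : Dich c u w) :
    ∃ i, ¬ Dich c u (antirod c w v i) := by
  obtain ⟨i, hi⟩ := hu
  by_contra! h
  have h₀ := (dich_antirod_iff hc _).1 (h i)
  have h₁ := (dich_antirod_iff hc _).1 (h (i + 1))
  have h₂ := (dich_antirod_iff hc _).1 (h (i + 2))
  obtain ⟨e₁, e₂, e₃, e₄⟩ := fin_three_cyclic_add i
  rw [e₁, e₂] at h₁
  rw [e₃, e₄] at h₂
  have hc_inv : ∀ s, c (c s) = s := hc
  have hdich : ∀ j, v j ≠ c (w j) := fun j hj => hvw ⟨j, hj⟩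
  grind

theorem twinPair_update_rod (i : Fin 3) : TwinPair c (update (rod c w v i) i (v i)) v (i + 2) := by
  refine ⟨by rw [update_of_ne (by lia), rod_add_two], fun j hj => ?_⟩
  obtain rfl | rfl : j = i ∨ j = i + 1 := by lia
  · rw [update_self]
  · rw [update_of_ne (by lia), rod_add_one]

theorem twinPair_update_rod_compl (hc : Involutive c) (i : Fin 3) :
    TwinPair c (update (rod c w v i) i (c (v i))) (c ∘ v) (i + 1) := by
  refine ⟨by rw [update_of_ne (by lia), rod_add_one, comp_apply, hc], fun j hj => ?_⟩
  obtain rfl | rfl : j = i ∨ j = i + 2 := by lia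
  · rw [update_self, comp_apply]
  · rw [update_of_ne (by lia), rod_add_two, comp_apply]

theorem ne_update_rod (hc' : ∀ s, c s ≠ s) (v : Fin 3 → α) (i : Fin 3) (t : α) :
    v ≠ update (rod c w v i) i t := fun h => hc' (v (i + 2)) <| by
  simpa [rod_add_two, update_of_ne (show i + 2 ≠ i by lia)] using (congrFun h (i + 2)).symm

theorem comp_ne_update_rod (hc' : ∀ s, c s ≠ s) (v : Fin 3 → α) (i : Fin 3) (t : α) :
    c ∘ v ≠ update (rod c w v i) i t := fun h => hc' (v (i + 1)) <| by
  simpa [rod_add_one, update_of_ne (show i + 1 ≠ i by lia)] using congrFun h (i + 1)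

/-- `v` is a word of `V` whose box meets the box of `w` although its letters all differ from those
of `w`. -/
structure IsPole (c : α → α) (V : Finset (Fin 3 → α)) (w v : Fin 3 → α) : Prop where
  mem : v ∈ V
  not_dich : ¬ Dich c v w
  ne : ∀ i, v i ≠ w i

variable [DecidableEq α] {V W : Finset (Fin 3 → α)}

/-- `V` is a code covering the box of `w`, with the fewest words meeting `w` among all codes
obtained from `V` by gluing and cutting. -/
structure MinimalCover (c : α → α) (V : Finset (Fin 3 → α)) (w : Fin 3 → α) : Prop where
  isCode : IsCode c V
  minimal : MinimalMeeting c V w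
  covers : ∀ x : Fin 3 → Selector c, MemBox x w → Covers V x

theorem MinimalCover.eq_comp_of_odd_flips (hc : Involutive c) (hc' : ∀ s, c s ≠ s)
    (hV : MinimalCover c V w) (hv : v ∈ V) (hvw : ¬ Dich c v w) (hu : u ∈ V)
    (huv : ∀ j, u j = v j ∨ u j = c (v j)) (hne : ∀ j, u j = c (v j) → v j ≠ w j)
    (hodd : Odd #{j | u j = c (v j)}) : u = c ∘ v := by
  have hle : #{j | u j = c (v j)} ≤ 3 := card_le_univ _
  obtain h1 | h3 : #{j | u j = c (v j)} = 1 ∨ #{j | u j = c (v j)} = Fintype.card (Fin 3) := by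
    rw [Fintype.card_fin]
    grind
  · obtain ⟨i, hi⟩ := card_eq_one.1 h1
    have mem_iff (j : Fin 3) : u j = c (v j) ↔ j = i := by simpa using Finset.ext_iff.1 hi j
    have hui : u i = c (v i) := (mem_iff i).2 rfl
    have htwin : TwinPair c u v i :=
      ⟨hui, fun j hj => (huv j).resolve_right fun h => hj ((mem_iff j).1 h)⟩
    exact absurd htwin (hV.minimal.not_twinPair hc hc' hv hvw (hne i hui) hu)
  · exact funext fun j => by simpa using Finset.ext_iff.1 ((card_eq_iff_eq_univ _).1 h3) j

theorem MinimalCover.isPole_comp (hc : Involutive c) (hc' : ∀ s, c s ≠ s)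
    (hV : MinimalCover c V w) (hv : IsPole c V w v) : IsPole c V w (c ∘ v) where
  mem := by
    obtain ⟨u, hu, -, huv, hodd⟩ := exists_odd_flip hc hc' hV.isCode hv.mem hv.not_dich hV.covers
      univ_nonempty fun i _ => hv.ne i
    rwa [← hV.eq_comp_of_odd_flips hc hc' hv.mem hv.not_dich hu (fun j => huv j (mem_univ j))
      (fun j _ => hv.ne j) hodd]
  not_dich := fun ⟨i, hi⟩ => hv.ne i (hc.injective hi)
  ne i hi := hv.not_dich ⟨i, hc.eq_iff.1 hi⟩

theorem MinimalCover.exists_isPole (hc : Involutive c) (hc' : ∀ s, c s ≠ s)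
    (hV : MinimalCover c V w) (hw : w ∉ V) : ∃ v, IsPole c V w v := by
  obtain ⟨x, hxw, -⟩ := exists_memBox_memBox hc hc' (not_dich_self hc' w)
  obtain ⟨v₀, hv₀, hxv₀⟩ := hV.covers x hxw
  obtain ⟨v, hv, hmax⟩ := exists_max_image (meeting c V w) (fun v => #{i | v i ≠ w i})
    ⟨v₀, mem_meeting.2 ⟨hv₀, hxv₀.not_dich hxw⟩⟩
  obtain ⟨hv, hvw⟩ := mem_meeting.1 hv
  have hD : ({i | v i ≠ w i} : Finset (Fin 3)).Nonempty := by
    obtain ⟨i, hi⟩ := ne_iff.1 (ne_of_mem_of_not_mem hv hw)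
    exact ⟨i, by simpa using hi⟩
  obtain ⟨u, hu, huw, huv, hodd⟩ := exists_odd_flip hc hc' hV.isCode hv hvw hV.covers hD
    fun i hi => (mem_filter.1 hi).2
  have hsub : ({i | v i ≠ w i} : Finset (Fin 3)) ⊆ ({i | u i ≠ w i} : Finset (Fin 3)) := by
    intro i hi
    rw [mem_filter_univ]
    rcases huv i hi with h | h
    · exact h ▸ (mem_filter.1 hi).2
    · exact fun hui => hvw ⟨i, hc.eq_iff.1 (h.symm.trans hui)⟩
  have hD_eq := eq_of_subset_of_card_le hsub (hmax u (mem_meeting.2 ⟨hu, huw⟩))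
  have huv_off (i : Fin 3) (hi : v i = w i) : u i = v i := by
    have : i ∉ ({i | u i ≠ w i} : Finset (Fin 3)) := hD_eq ▸ by simpa using hi
    simpa [hi] using this
  have hne (j : Fin 3) (hj : u j = c (v j)) : v j ≠ w j := fun h =>
    hc' (v j) (hj.symm.trans (huv_off j h))
  have hu_eq : u = c ∘ v := by
    refine hV.eq_comp_of_odd_flips hc hc' hv hvw hu (fun j => ?_) hne ?_
    · by_cases hj : v j = w j
      · exact .inl (huv_off j hj)
      · exact huv j (by simpa using hj)
    · rwa [filter_filter, filter_congr fun j _ => and_iff_right_of_imp (hne j)] at hodd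
  exact ⟨v, hv, hvw, fun i => hne i (congrFun hu_eq i)⟩

theorem MinimalCover.not_twinPair (hc : Involutive c) (hc' : ∀ s, c s ≠ s)
    (hV : MinimalCover c V w) (hv : IsPole c V w v) (hu : u ∈ V) : ¬ TwinPair c u v i :=
  hV.minimal.not_twinPair hc hc' hv.mem hv.not_dich (hv.ne i) hu

theorem MinimalCover.isRod (hc : Involutive c) (hc' : ∀ s, c s ≠ s) (hV : MinimalCover c V w)
    (hv : IsPole c V w v) (hu : u ∈ V) (h₁ : u (i + 1) = v (i + 1))
    (h₂ : u (i + 2) = c (v (i + 2))) : IsRod c v i u := by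
  refine ⟨fun h₀ => ?_, fun h₀ => ?_, h₁, h₂⟩
  · refine hV.not_twinPair hc hc' hv hu (i := i + 2) ⟨h₂, fun j hj => ?_⟩
    obtain rfl | rfl : j = i ∨ j = i + 1 := by lia
    exacts [h₀, h₁]
  · refine hV.not_twinPair hc hc' (hV.isPole_comp hc hc' hv) hu (i := i + 1)
      ⟨by rw [comp_apply, hc, h₁], fun j hj => ?_⟩
    obtain rfl | rfl : j = i ∨ j = i + 2 := by lia
    exacts [h₀, h₂]

theorem MinimalCover.exists_isRod (hc : Involutive c) (hc' : ∀ s, c s ≠ s)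
    (hV : MinimalCover c V w) (hv : IsPole c V w v) (i : Fin 3) :
    ∃ u ∈ V, ¬ Dich c u w ∧ (IsRod c v i u ∨ IsRod c (c ∘ v) i u) := by
  obtain ⟨u, hu, huw, huv, hodd⟩ := exists_odd_flip hc hc' hV.isCode hv.mem hv.not_dich hV.covers
    (insert_nonempty (i + 1) {i + 2}) fun j _ => hv.ne j
  refine ⟨u, hu, huw, ?_⟩
  have h₁₂ : i + 1 ≠ i + 2 := by lia
  simp only [mem_insert, mem_singleton, forall_eq_or_imp, forall_eq] at huv
  rw [filter_insert, filter_singleton] at hodd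
  rcases huv with ⟨h₁ | h₁, h₂ | h₂⟩
  · simp [h₁, h₂, (hc' _).symm] at hodd
  · exact .inl (hV.isRod hc hc' hv hu h₁ h₂)
  · exact .inr (hV.isRod hc hc' (hV.isPole_comp hc hc' hv) hu h₁ (by rw [comp_apply, hc, h₂]))
  · rw [if_pos h₁, if_pos h₂, card_pair h₁₂] at hodd
    exact absurd hodd (by decide)

theorem MinimalCover.exists_isPole_forall_exists_isRod (hc : Involutive c) (hc' : ∀ s, c s ≠ s)
    (hV : MinimalCover c V w) (hw : w ∉ V) :
    ∃ v, IsPole c V w v ∧ ∀ i, ∃ u ∈ V, ¬ Dich c u w ∧ IsRod c v i u := by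
  obtain ⟨v, hv⟩ := hV.exists_isPole hc hc' hw
  have hrod := hV.exists_isRod hc hc' hv
  by_cases h : ∀ i, ∃ u ∈ V, ¬ Dich c u w ∧ IsRod c v i u
  · exact ⟨v, hv, h⟩
  push Not at h
  obtain ⟨i, hi⟩ := h
  obtain ⟨u, hu, huw, hui⟩ := hrod i
  replace hui := hui.resolve_left (hi u hu huw)
  refine ⟨c ∘ v, hV.isPole_comp hc hc' hv, fun j => ?_⟩
  by_cases hij : i = j
  · exact ⟨u, hu, huw, hij ▸ hui⟩
  · obtain ⟨u', hu', huw', hj⟩ := hrod j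
    exact ⟨u', hu', huw', hj.resolve_left fun hj =>
      hj.not_isRod_comp hc hc' hV.isCode hu' hu (Ne.symm hij) hui⟩

theorem MinimalCover.exists_isPole_forall_rod_mem (hc : Involutive c) (hc' : ∀ s, c s ≠ s)
    (hV : MinimalCover c V w) (hw : w ∉ V) : ∃ v, IsPole c V w v ∧ ∀ i, rod c w v i ∈ V := by
  obtain ⟨v, hv, hrod⟩ := hV.exists_isPole_forall_exists_isRod hc hc' hw
  refine ⟨v, hv, fun i => ?_⟩
  obtain ⟨u, hu, huw, hui⟩ := hrod i
  obtain ⟨u', hu', -, hui'⟩ := hrod (i + 1)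
  have hw_ne (j : Fin 3) : w j ≠ c (v j) := fun h => hv.not_dich ⟨j, hc.eq_iff.1 h.symm⟩
  have h₀ : u i = w i := by
    by_contra hne
    have hpole : IsPole c V w u := by
      refine ⟨hu, huw, (forall_fin_three_cyclic i).2 ⟨hne, ?_, ?_⟩⟩
      · exact hui.2.2.1 ▸ hv.ne _
      · exact hui.2.2.2 ▸ (hw_ne _).symm
    exact hui'.not_isRod_comp hc hc' hV.isCode hu' (hV.isPole_comp hc hc' hpole).mem (by lia)
      (hui.isRod_comp hc)
  have hu_eq : rod c w v i = u := funext <| (forall_fin_three_cyclic i).2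
    ⟨(rod_self i).trans h₀.symm, (rod_add_one i).trans hui.2.2.1.symm,
      (rod_add_two i).trans hui.2.2.2.symm⟩
  exact hu_eq ▸ hu

/-- Recutting `rod, antirod` into the letters of `v` and `c ∘ v` produces words that can be glued
with `v` and with `c ∘ v`. -/
theorem MinimalCover.antirod_notMem (hc : Involutive c) (hc' : ∀ s, c s ≠ s)
    (hV : MinimalCover c V w) (hv : IsPole c V w v) (i : Fin 3) (hrod : rod c w v i ∈ V) :
    antirod c w v i ∉ V := by
  intro hanti
  have hcv := hV.isPole_comp hc hc' hv
  have hrod_w : ¬ Dich c (rod c w v i) w := by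
    rw [dich_iff_cyclic i, rod_self, rod_add_one, rod_add_two, not_or, not_or]
    exact ⟨(hc' _).symm, fun h => hv.not_dich ⟨_, h⟩, fun h => hcv.not_dich ⟨_, h⟩⟩
  have comp_ne : c ∘ v ≠ v := fun h => hc' (v i) (congrFun h i)
  have ne_v := ne_update_rod (w := w) hc' v i
  have ne_cv := comp_ne_update_rod (w := w) hc' v i
  have ne_v_rod : v ≠ rod c w v i := by simpa using ne_v (rod c w v i i)
  have ne_cv_rod : c ∘ v ≠ rod c w v i := by simpa using ne_cv (rod c w v i i)
  obtain ⟨V₁, hV₁, hle, hsub₁⟩ :=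
    exists_gcStep_card_meeting_le_succ (i := i) hc hrod (by rwa [rod_self]) hrod_w (v i)
  obtain ⟨V₂, hV₂, hlt₂, hsub₂⟩ := exists_gcStep_card_meeting_lt (V := V₁) hc hc'
    (hsub₁ (by simp [hv.mem, ne_v, ne_v_rod])) (hsub₁ (by simp)) (twinPair_update_rod (w := w) i)
    hv.not_dich (hv.ne _)
  obtain ⟨V₃, hV₃, hlt₃, -⟩ := exists_gcStep_card_meeting_lt (V := V₂) hc hc'
    (hsub₂ (by simp [hsub₁ _, hcv.mem, ne_cv, ne_cv_rod, comp_ne]))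
    (hsub₂ (by simp [hsub₁ _, (ne_v _).symm, (update_injective _ i).eq_iff, hc' _]))
    (twinPair_update_rod_compl (w := w) hc i) hcv.not_dich (hcv.ne _)
  have := hV.minimal V₃ (((Relation.ReflTransGen.single hV₁).tail hV₂).tail hV₃)
  lia

theorem MinimalCover.dich_antirod (hc : Involutive c) (hc' : ∀ s, c s ≠ s)
    (hV : MinimalCover c V w) (hv : IsPole c V w v) (hrod : ∀ i, rod c w v i ∈ V) (hu : u ∈ V)
    (i : Fin 3) : Dich c u (antirod c w v i) := by
  by_cases huv : u = v
  · exact (dich_antirod_iff hc i).2 (.inr (.inr (congrFun huv _)))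
  by_cases hucv : u = c ∘ v
  · exact (dich_antirod_iff hc i).2 (.inr (.inl (congrFun hucv _)))
  by_cases hur : ∃ j, u = rod c w v j
  · obtain ⟨j, rfl⟩ := hur
    exact dich_rod_antirod hc i j
  obtain ⟨j, rfl⟩ := exists_eq_antirod hc hc' hv.not_dich hv.ne
    (hV.isCode u hu v hv.mem huv) (hV.isCode u hu _ (hV.isPole_comp hc hc' hv).mem hucv)
    fun j => hV.isCode u hu _ (hrod j) fun h => hur ⟨j, h⟩
  exact absurd hu (hV.antirod_notMem hc hc' hv j (hrod j))

/-- The words of `V` are `v`, `c ∘ v` and the three rods, so the antirods are dichotomous to all of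
`V`, hence to all of `W`; this leaves no room in `W` for a word other than `w`. -/
theorem MinimalCover.mem_of_sameUnion (hc : Involutive c) (hc' : ∀ s, c s ≠ s)
    (hV : MinimalCover c V w) (hW : IsCode c W) (h : SameUnion c V W) (hw : w ∈ W) : w ∈ V := by
  by_contra hwV
  obtain ⟨v, hv, hrod⟩ := hV.exists_isPole_forall_rod_mem hc hc' hwV
  have eq_w (u) (hu : u ∈ W) : u = w := by
    by_contra hne
    obtain ⟨i, hi⟩ := exists_not_dich_antirod hc hc' hv.not_dich hv.ne (hW u hu w hw hne)
    obtain ⟨u', hu', hdich⟩ := h.exists_not_dich hc hc' hu fun hd => hi (hd.symm hc)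
    exact hdich ((hV.dich_antirod hc hc' hv hrod hu' i).symm hc)
  have hmeets : ¬ Dich c (update w 0 (c (w 0))) v := by
    rintro ⟨j, hj⟩
    by_cases hj0 : j = 0
    · subst hj0
      exact hv.ne 0 (hc.injective (by simpa using hj.symm))
    · exact hv.not_dich ⟨j, hc.eq_iff.1 (by simpa [hj0] using hj.symm)⟩
  obtain ⟨u, hu, hdich⟩ := h.symm.exists_not_dich hc hc' hv.mem hmeets
  rw [eq_w u hu] at hdich
  exact hdich ⟨0, update_self ..⟩

theorem exists_gc_mem_of_sameUnion_dim_three (hc : Involutive c) (hc' : ∀ s, c s ≠ s)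
    (hV : IsCode c V) (hW : IsCode c W) (h : SameUnion c V W) (hw : w ∈ W) :
    ∃ U, GC c V U ∧ w ∈ U := by
  obtain ⟨U, hVU, hmin⟩ := exists_gc_minimalMeeting c V w
  have hUW : SameUnion c U W := (hVU.sameUnion hc).symm.trans h
  have hU : MinimalCover c U w := ⟨hVU.isCode hc hc' hV, hmin, fun x hx => (hUW x).2 ⟨w, hw, hx⟩⟩
  exact ⟨U, hVU, hU.mem_of_sameUnion hc hc' hW hUW hw⟩

end DimensionThree

section Erase

theorem IsCode.mono {α : Type} {c : α → α} {d : ℕ} {V W : Finset (Fin d → α)} (hW : IsCode c W)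
    (hVW : V ⊆ W) : IsCode c V :=
  fun v hv w hw => hW v (hVW hv) w (hVW hw)

variable {α : Type} [DecidableEq α] {c : α → α} {d : ℕ} {V W : Finset (Fin d → α)} {w : Fin d → α}

theorem IsCode.covers_erase_iff (hV : IsCode c V) (hw : w ∈ V) (x : Fin d → Selector c) :
    Covers (V.erase w) x ↔ Covers V x ∧ ¬ MemBox x w := by
  constructor
  · rintro ⟨v, hv, hxv⟩
    obtain ⟨hne, hvV⟩ := mem_erase.1 hv
    exact ⟨⟨v, hvV, hxv⟩, fun hxw => hne (hV.eq_of_memBox hvV hw hxv hxw)⟩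
  · rintro ⟨⟨v, hv, hxv⟩, hxw⟩
    exact ⟨v, mem_erase.2 ⟨fun h => hxw (h ▸ hxv), hv⟩, hxv⟩

theorem SameUnion.erase (hV : IsCode c V) (hW : IsCode c W) (h : SameUnion c V W) (hwV : w ∈ V)
    (hwW : w ∈ W) : SameUnion c (V.erase w) (W.erase w) := fun x => by
  rw [hV.covers_erase_iff hwV, hW.covers_erase_iff hwW, h x]

end Erase

theorem gc_of_sameUnion_dim_three {α : Type} [DecidableEq α] {c : α → α} (hc : Involutive c)
    (hc' : ∀ s, c s ≠ s) {V W : Finset (Fin 3 → α)} (hV : IsCode c V) (hW : IsCode c W)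
    (h : SameUnion c V W) : GC c V W := by
  induction W using Finset.strongInduction generalizing V with
  | H W ih =>
    rcases W.eq_empty_or_nonempty with rfl | ⟨w, hw⟩
    · rw [h.eq_empty hc hc']
      exact .refl
    obtain ⟨U, hVU, hwU⟩ := exists_gc_mem_of_sameUnion_dim_three hc hc' hV hW h hw
    have hU : IsCode c U := hVU.isCode hc hc' hV
    have hUW : SameUnion c U W := (hVU.sameUnion hc).symm.trans h
    have hUw : U.erase w ∪ {w} = U := by rw [union_comm, ← insert_eq, insert_erase hwU]
    have hWw : W.erase w ∪ {w} = W := by rw [union_comm, ← insert_eq, insert_erase hw]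
    have hgc := ih (W.erase w) (erase_ssubset hw) (hU.mono (erase_subset w U))
      (hW.mono (erase_subset w W)) (hUW.erase hU hW hwU hw)
    exact hVU.trans (hUw ▸ hWw ▸ hgc.union_right hc hc' (hUw.symm ▸ hU) (by simp))

section Layers

open Matrix (vecCons vecTail)

variable {α : Type} {c : α → α} {n : ℕ} {a k : α}

theorem memBox_vecCons_iff {e : Selector c} {y : Fin n → Selector c} {v : Fin (n + 1) → α} :
    MemBox (vecCons e y) v ↔ e (v 0) ∧ MemBox y (vecTail v) :=
  Fin.forall_fin_succ

theorem dich_vecCons_iff (hc' : ∀ s, c s ≠ s) {t t' : Fin n → α} :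
    Dich c (vecCons k t) (vecCons k t') ↔ Dich c t t' := by
  simp [Dich, Fin.exists_fin_succ, (hc' k).symm]

theorem vecCons_right_injective (k : α) : Injective (vecCons k : (Fin n → α) → _) :=
  Fin.cons_right_injective (α := fun _ => α) k

/-- The union of the boxes of `V` depends in the direction `0` only on the choice between `a` and
`c a`. -/
def DependsOnlyOn (c : α → α) (V : Finset (Fin (n + 1) → α)) (a : α) : Prop :=
  ∀ e e' : Selector c, e a = e' a → ∀ y, Covers V (vecCons e y) → Covers V (vecCons e' y)

theorem DependsOnlyOn.congr {V W : Finset (Fin (n + 1) → α)} (hV : DependsOnlyOn c V a)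
    (h : SameUnion c V W) : DependsOnlyOn c W a :=
  fun e e' he y hy => (h _).1 (hV e e' he y ((h _).2 hy))

variable [DecidableEq α] {V W : Finset (Fin (n + 1) → α)} {U U' : Finset (Fin n → α)}

/-- The words `t` such that the word `k, t` belongs to `V`. -/
def layer (V : Finset (Fin (n + 1) → α)) (k : α) : Finset (Fin n → α) :=
  {v ∈ V | v 0 = k}.image vecTail

theorem image_vecCons_layer (V : Finset (Fin (n + 1) → α)) (k : α) :
    (layer V k).image (vecCons k) = {v ∈ V | v 0 = k} := by
  rw [layer, image_image]
  exact (image_congr fun v hv => (mem_filter.1 hv).2 ▸ Matrix.cons_head_tail v).trans image_id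

theorem mem_layer {t : Fin n → α} : t ∈ layer V k ↔ vecCons k t ∈ V := by
  have h := congrArg (vecCons k t ∈ ·) (image_vecCons_layer V k)
  simpa [(vecCons_right_injective k).mem_finset_image] using h

theorem vecTail_mem_layer {v : Fin (n + 1) → α} (hv : v ∈ V) : vecTail v ∈ layer V (v 0) :=
  mem_layer.2 ((Matrix.cons_head_tail v).symm ▸ hv)

theorem IsCode.layer (hc' : ∀ s, c s ≠ s) (hV : IsCode c V) (k : α) : IsCode c (layer V k) :=
  fun _ ht _ ht' hne => (dich_vecCons_iff hc').1 <| hV _ (mem_layer.1 ht) _ (mem_layer.1 ht')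
    ((vecCons_right_injective k).ne hne)

theorem covers_vecCons_iff {e : Selector c} {y : Fin n → Selector c} :
    Covers V (vecCons e y) ↔ ∃ k, e k ∧ Covers (layer V k) y := by
  constructor
  · rintro ⟨v, hv, hxv⟩
    obtain ⟨he, hy⟩ := memBox_vecCons_iff.1 hxv
    exact ⟨v 0, he, vecTail v, vecTail_mem_layer hv, hy⟩
  · rintro ⟨k, he, t, ht, hy⟩
    exact ⟨vecCons k t, mem_layer.1 ht, memBox_vecCons_iff.2 ⟨he, hy⟩⟩

theorem GCStep.image_vecCons (hc : Involutive c) (h : GCStep c U U') (k : α) :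
    GCStep c (U.image (vecCons k)) (U'.image (vecCons k)) := by
  obtain ⟨v, i, s, hv, hv', rfl⟩ := (gcStep_iff hc).1 h
  have hupdate (s : α) : update (vecCons k v) i.succ s = vecCons k (update v i s) :=
    (Fin.cons_update ..).symm
  refine (gcStep_iff hc).2 ⟨vecCons k v, i.succ, s, mem_image_of_mem _ hv, ?_, ?_⟩
  · rw [hupdate]
    exact mem_image_of_mem _ hv'
  · simp only [hupdate, Matrix.cons_val_succ, image_union, image_insert, image_singleton,
      image_sdiff _ _ (vecCons_right_injective k)]

theorem GC.image_vecCons (hc : Involutive c) (h : GC c U U') (k : α) :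
    GC c (U.image (vecCons k)) (U'.image (vecCons k)) :=
  h.lift _ fun _ _ hstep => hstep.image_vecCons hc k

theorem GC.replace_layer (hc : Involutive c) (hc' : ∀ s, c s ≠ s) (hV : IsCode c V)
    (h : GC c (layer V k) U) : GC c V (U.image (vecCons k) ∪ {v ∈ V | v 0 ≠ k}) := by
  have hlift : GC c {v ∈ V | v 0 = k} (U.image (vecCons k)) :=
    image_vecCons_layer V k ▸ GC.image_vecCons hc h k
  have hsplit : {v ∈ V | v 0 = k} ∪ {v ∈ V | v 0 ≠ k} = V := filter_union_filter_not_eq _ V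
  have := hlift.union_right hc hc' (hsplit.symm ▸ hV) (disjoint_filter_filter_not V V _)
  rwa [hsplit] at this

theorem DependsOnlyOn.covers_layer_compl (hc : Involutive c) (hc' : ∀ s, c s ≠ s)
    (hV : IsCode c V) (hdep : DependsOnlyOn c V a) (hk : k ≠ a) (hk' : k ≠ c a)
    {y : Fin n → Selector c} (hy : Covers (layer V k) y) : Covers (layer V (c k)) y := by
  obtain ⟨e, he⟩ := Selector.exists_chooses hc hc' k
  obtain ⟨t, ht, hyt⟩ := hy
  have ha : ¬ (a = k ∨ a = c k) := not_or.2 ⟨hk.symm, fun h => hk' (hc.eq_iff.1 h.symm)⟩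
  have hflip := hdep e (e.flip hc k) (Selector.flip_apply_of_notMem hc e ha).symm y
    (covers_vecCons_iff.2 ⟨k, he, t, ht, hyt⟩)
  obtain ⟨l, hl, t', ht', hyt'⟩ := covers_vecCons_iff.1 hflip
  by_cases hlk : l = k ∨ l = c k
  · rw [Selector.flip_apply_of_mem hc e hlk] at hl
    rcases hlk with rfl | rfl
    · simp [he] at hl
    · exact ⟨t', ht', hyt'⟩
  · rw [Selector.flip_apply_of_notMem hc e hlk] at hl
    have heq := hV.eq_of_memBox (mem_layer.1 ht) (mem_layer.1 ht')
      (memBox_vecCons_iff.2 ⟨he, hyt⟩) (memBox_vecCons_iff.2 ⟨hl, hyt'⟩)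
    exact absurd (.inl (Matrix.vecCons_inj.1 heq).1.symm) hlk

theorem DependsOnlyOn.sameUnion_layer_compl (hc : Involutive c) (hc' : ∀ s, c s ≠ s)
    (hV : IsCode c V) (hdep : DependsOnlyOn c V a) (hk : k ≠ a) (hk' : k ≠ c a) :
    SameUnion c (layer V (c k)) (layer V k) := fun y =>
  ⟨fun hy => by
    simpa only [hc k] using hdep.covers_layer_compl hc hc' hV (fun h => hk' (hc.eq_iff.1 h))
      (hc.injective.ne hk) hy,
    hdep.covers_layer_compl hc hc' hV hk hk'⟩

/-- The words of `V` whose first letter is neither `a` nor `c a`. -/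
def foreign (c : α → α) (a : α) (V : Finset (Fin (n + 1) → α)) : Finset (Fin (n + 1) → α) :=
  {v ∈ V | v 0 ≠ a ∧ v 0 ≠ c a}

theorem foreign_union (V W : Finset (Fin (n + 1) → α)) :
    foreign c a (V ∪ W) = foreign c a V ∪ foreign c a W :=
  filter_union ..

theorem card_foreign_replace_layer_le (hk : k ≠ a) (hk' : k ≠ c a) (hle : #U ≤ #(layer V k)) :
    #(foreign c a (U.image (vecCons k) ∪ {v ∈ V | v 0 ≠ k})) ≤ #(foreign c a V) := by
  have hlayer : foreign c a {v ∈ V | v 0 = k} = {v ∈ V | v 0 = k} :=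
    filter_eq_self.2 fun v hv => (mem_filter.1 hv).2.symm ▸ ⟨hk, hk'⟩
  calc _ ≤ #(U.image (vecCons k)) + #(foreign c a {v ∈ V | v 0 ≠ k}) := by
        rw [foreign_union]
        exact (card_union_le _ _).trans (Nat.add_le_add_right (card_filter_le _ _) _)
    _ ≤ #(foreign c a {v ∈ V | v 0 = k}) + #(foreign c a {v ∈ V | v 0 ≠ k}) := by
        rw [hlayer, ← image_vecCons_layer, card_image_of_injective _ (vecCons_right_injective k),
          card_image_of_injective _ (vecCons_right_injective k)]
        exact Nat.add_le_add_right hle _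
    _ = #(foreign c a V) := by
        rw [← card_union_of_disjoint, ← foreign_union, filter_union_filter_not_eq]
        exact disjoint_filter_filter (disjoint_filter_filter_not V V _)

theorem exists_gcStep_card_foreign_lt (hc : Involutive c) {t : Fin n → α} (hk : k ≠ a)
    (hk' : k ≠ c a) (ht : vecCons k t ∈ V) (ht' : vecCons (c k) t ∈ V) :
    ∃ W, GCStep c V W ∧ #(foreign c a W) < #(foreign c a V) := by
  have hupdate (l s : α) : update (vecCons l t) 0 s = vecCons s t := Fin.update_cons_zero ..
  refine ⟨_, (gcStep_iff hc).2 ⟨vecCons k t, 0, a, ht, by simpa [hupdate] using ht', rfl⟩, ?_⟩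
  have hnew : foreign c a {update (vecCons k t) 0 a, update (vecCons k t) 0 (c a)} = ∅ := by
    simp [foreign, filter_eq_empty_iff]
  rw [foreign_union, hnew, union_empty]
  refine card_lt_card ((ssubset_iff_of_subset ?_).2 ⟨vecCons k t, ?_, ?_⟩)
  · exact filter_subset_filter _ sdiff_subset
  · simp [foreign, ht, hk, hk']
  · simp [foreign]

theorem DependsOnlyOn.exists_gc_foreign_eq_empty (hc : Involutive c) (hc' : ∀ s, c s ≠ s)
    (hn : ∀ U U' : Finset (Fin n → α), IsCode c U → IsCode c U' → SameUnion c U U' → GC c U U')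
    (hV : IsCode c V) (hdep : DependsOnlyOn c V a) : ∃ W, GC c V W ∧ foreign c a W = ∅ := by
  obtain ⟨W, hVW, hmin⟩ :=
    exists_minimalFor_of_wellFoundedLT (GC c V) (fun W => #(foreign c a W)) ⟨V, .refl⟩
  refine ⟨W, hVW, eq_empty_of_forall_notMem fun v hv => ?_⟩
  obtain ⟨hvW, hk, hk'⟩ := mem_filter.1 hv
  have hW : IsCode c W := GC.isCode hc hc' hVW hV
  have hgc := hn _ _ (hW.layer hc' _) (hW.layer hc' _) <|
    (hdep.congr (GC.sameUnion hc hVW)).sameUnion_layer_compl hc hc' hW hk hk'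
  have ht : vecTail v ∈ layer W (v 0) := vecTail_mem_layer hvW
  obtain ⟨W', hstep, hlt⟩ := exists_gcStep_card_foreign_lt (a := a)
    (V := (layer W (v 0)).image (vecCons (c (v 0))) ∪ {w ∈ W | w 0 ≠ c (v 0)}) (t := vecTail v)
    hc hk hk' (by simp [mem_layer.1 ht, (hc' _).symm])
    (mem_union_left _ (mem_image_of_mem _ ht))
  have hle := card_foreign_replace_layer_le (V := W) (U := layer W (v 0))
    (fun h => hk' (hc.eq_iff.1 h)) (hc.injective.ne hk) (GC.card_le hc hc' hgc)
  have hVW' := (hVW.trans (GC.replace_layer hc hc' hW hgc)).tail hstep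
  exact ((le_total _ _).elim id (hmin hVW')).not_gt (hlt.trans_le hle)

theorem eq_or_eq_of_foreign_eq_empty (hV : foreign c a V = ∅) {v : Fin (n + 1) → α}
    (hv : v ∈ V) : v 0 = a ∨ v 0 = c a := by
  simpa [or_iff_not_imp_left] using filter_eq_empty_iff.1 hV hv

theorem covers_vecCons_iff_covers_layer (hc : Involutive c) (hV : foreign c a V = ∅)
    (hk : k = a ∨ k = c a) {e : Selector c} (he : e k) {y : Fin n → Selector c} :
    Covers V (vecCons e y) ↔ Covers (layer V k) y := by
  refine covers_vecCons_iff.trans ⟨?_, fun hy => ⟨k, he, hy⟩⟩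
  rintro ⟨l, hl, t, ht, hyt⟩
  have hl' : l = a ∨ l = c a := eq_or_eq_of_foreign_eq_empty hV (mem_layer.1 ht)
  have hlk : l = k ∨ l = c k := by
    rcases hl' with rfl | rfl <;> rcases hk with rfl | rfl <;> simp [hc _]
  rcases hlk with rfl | rfl
  · exact ⟨t, ht, hyt⟩
  · simp [e.chooses_compl, he] at hl

theorem SameUnion.layer (hc : Involutive c) (hc' : ∀ s, c s ≠ s) (h : SameUnion c V W)
    (hV : foreign c a V = ∅) (hW : foreign c a W = ∅) (hk : k = a ∨ k = c a) :
    SameUnion c (layer V k) (layer W k) := by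
  obtain ⟨e, he⟩ := Selector.exists_chooses hc hc' k
  intro y
  rw [← covers_vecCons_iff_covers_layer hc hV hk he, h,
    covers_vecCons_iff_covers_layer hc hW hk he]

theorem image_layer_union_image_layer (hV : foreign c a V = ∅) :
    (layer V a).image (vecCons a) ∪ (layer V (c a)).image (vecCons (c a)) = V := by
  rw [image_vecCons_layer, image_vecCons_layer, ← filter_or, filter_true_of_mem]
  exact fun v hv => eq_or_eq_of_foreign_eq_empty hV hv

theorem disjoint_image_vecCons {l : α} (hkl : k ≠ l) (U U' : Finset (Fin n → α)) :
    Disjoint (U.image (vecCons k)) (U'.image (vecCons l)) := by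
  simp only [Finset.disjoint_left, mem_image]
  rintro _ ⟨t, -, rfl⟩ ⟨t', -, h⟩
  exact hkl (Matrix.vecCons_inj.1 h).1.symm

theorem gc_of_foreign_eq_empty (hc : Involutive c) (hc' : ∀ s, c s ≠ s)
    (hn : ∀ U U' : Finset (Fin n → α), IsCode c U → IsCode c U' → SameUnion c U U' → GC c U U')
    (hV : IsCode c V) (hW : IsCode c W) (h : SameUnion c V W) (hVa : foreign c a V = ∅)
    (hWa : foreign c a W = ∅) : GC c V W := by
  have hgc {k : α} (hk : k = a ∨ k = c a) :
      GC c ((layer V k).image (vecCons k)) ((layer W k).image (vecCons k)) :=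
    GC.image_vecCons hc (hn _ _ (hV.layer hc' k) (hW.layer hc' k)
      (h.layer hc hc' hVa hWa hk)) k
  have hcode := hV
  rw [← image_layer_union_image_layer hVa] at hcode ⊢
  have h₁ := (hgc (.inl rfl)).union_right hc hc' hcode (disjoint_image_vecCons (hc' a).symm _ _)
  have hcode₁ := GC.isCode hc hc' h₁ hcode
  rw [union_comm] at hcode₁
  have h₂ := (hgc (.inr rfl)).union_right hc hc' hcode₁ (disjoint_image_vecCons (hc' a) _ _)
  rw [union_comm, union_comm ((layer W (c a)).image _), image_layer_union_image_layer hWa] at h₂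
  exact h₁.trans h₂

theorem DependsOnlyOn.gc_of_sameUnion (hc : Involutive c) (hc' : ∀ s, c s ≠ s)
    (hn : ∀ U U' : Finset (Fin n → α), IsCode c U → IsCode c U' → SameUnion c U U' → GC c U U')
    (hV : IsCode c V) (hW : IsCode c W) (h : SameUnion c V W) (hdep : DependsOnlyOn c V a) :
    GC c V W := by
  obtain ⟨V', hVV', hV'a⟩ := hdep.exists_gc_foreign_eq_empty hc hc' hn hV
  obtain ⟨W', hWW', hW'a⟩ := (hdep.congr h).exists_gc_foreign_eq_empty hc hc' hn hW
  have h' : SameUnion c V' W' :=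
    (GC.sameUnion hc hVV').symm.trans (h.trans (GC.sameUnion hc hWW'))
  have hVW' : GC c V' W' := gc_of_foreign_eq_empty hc hc' hn (GC.isCode hc hc' hVV' hV)
    (GC.isCode hc hc' hWW' hW) h' hV'a hW'a
  exact hVV'.trans (hVW'.trans (GC.symm hc hc' hWW' hW))

end Layers

section Completion

variable {α : Type} {c : α → α} {d : ℕ} {V : Finset (Fin d → α)}

/-- Position of the point `x` with respect to the word `v`: the coordinates in which `x` lies in
the factor of the box of `v`. -/
def pattern (x : Fin d → Selector c) (v : Fin d → α) : Fin d → Bool :=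
  fun i => x i (v i)

theorem IsCode.injOn_pattern (hV : IsCode c V) (x : Fin d → Selector c) :
    Set.InjOn (pattern x) V := fun v hv w hw h => by
  by_contra hne
  obtain ⟨i, hi⟩ := hV v hv w hw hne
  simpa [pattern, hi, (x i).chooses_compl] using congrFun h i

theorem IsCode.card_image_pattern (hV : IsCode c V) (x : Fin d → Selector c) :
    #(V.image (pattern x)) = #V :=
  card_image_of_injOn (hV.injOn_pattern x)

theorem IsCode.card_filter_image_pattern (hV : IsCode c V) (x : Fin d → Selector c) (i : Fin d) :
    #{p ∈ V.image (pattern x) | p i} = #{v ∈ V | x i (v i)} := by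
  rw [filter_image, card_image_of_injOn ((hV.injOn_pattern x).mono (filter_subset _ _))]
  rfl

theorem IsCode.existsUnique_notMem_image_pattern (hV : IsCode c V) (hcard : #V + 1 = 2 ^ d)
    (x : Fin d → Selector c) : ∃! p, p ∉ V.image (pattern x) := by
  have : #(V.image (pattern x))ᶜ = 1 := by
    rw [card_compl, hV.card_image_pattern]
    simp [← hcard]
  simpa only [mem_compl] using (singleton_iff_unique_mem _).1 (card_eq_one.1 this)

theorem CubeTiling.covers (hV : CubeTiling c V) (x : Fin d → Selector c) : Covers V x := by
  have huniv : V.image (pattern x) = univ :=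
    eq_univ_of_card _ (by rw [hV.1.card_image_pattern, hV.2]; simp)
  obtain ⟨v, hv, h⟩ := mem_image.1 (huniv.symm ▸ mem_univ fun _ => true)
  exact ⟨v, hv, congrFun h⟩

variable [DecidableEq α]

theorem exists_card_filter_lt_card_filter_compl (hc : Involutive c) (hc' : ∀ s, c s ≠ s)
    (hodd : Odd #V) (i : Fin d) : ∃ s, #{v ∈ V | v i = s} < #{v ∈ V | v i = c s} := by
  by_contra! h
  have heq (s : α) : #{v ∈ V | v i = c s} = #{v ∈ V | v i = s} :=
    (h s).antisymm (by simpa only [hc s] using h (c s))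
  have hmem {s : α} (hs : s ∈ V.image (· i)) : c s ∈ V.image (· i) := by
    have hpos := card_pos.2 (fiber_nonempty_iff_mem_image.2 hs)
    exact fiber_nonempty_iff_mem_image.1 (card_pos.1 (hpos.trans_eq (heq s).symm))
  have : ((#V : ℕ) : ZMod 2) = 0 := by
    rw [card_eq_sum_card_image (· i) V, Nat.cast_sum]
    refine sum_involution (fun s _ => c s) (fun s _ => ?_) (fun s _ _ => hc' s)
      (fun s hs => hmem hs) fun s _ => hc s
    rw [heq, CharTwo.add_self_eq_zero]
  exact Nat.not_even_iff_odd.2 hodd ((ZMod.natCast_eq_zero_iff_even).1 this)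

theorem card_filter_flip (hc : Involutive c) {e : Selector c} {s : α} (hs : e s)
    (V : Finset (Fin d → α)) (i : Fin d) :
    #{v ∈ V | e.flip hc s (v i)} + #{v ∈ V | v i = s} =
      #{v ∈ V | e (v i)} + #{v ∈ V | v i = c s} := by
  have hflip : e.flip hc s s = false := by simp [Selector.flip_apply_of_mem, hs]
  have hcompl : e (c s) = false := by simp [e.chooses_compl, hs]
  have hdisj : Disjoint {v ∈ V | e.flip hc s (v i)} {v ∈ V | v i = s} :=
    disjoint_filter.2 fun v _ hv hvs => by simp [hvs, hflip] at hv
  have hdisj' : Disjoint {v ∈ V | e (v i)} {v ∈ V | v i = c s} :=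
    disjoint_filter.2 fun v _ hv hvs => by simp [hvs, hcompl] at hv
  rw [← card_union_of_disjoint hdisj, ← card_union_of_disjoint hdisj', ← filter_or, ← filter_or]
  refine congrArg card (filter_congr fun v _ => ?_)
  by_cases hv : v i = s ∨ v i = c s
  · rw [Selector.flip_apply_of_mem hc e hv]
    rcases hv with hv | hv <;> simp [hv, hs, hcompl]
  · rw [Selector.flip_apply_of_notMem hc e hv]
    simp [not_or.1 hv]

theorem IsCode.exists_notMem_image_pattern (hc : Involutive c) (hV : IsCode c V) {i : Fin d}
    {s : α} (hlt : #{v ∈ V | v i = s} < #{v ∈ V | v i = c s}) {x : Fin d → Selector c}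
    (hx : x i s) : ∃ p, p i ∧ p ∉ V.image (pattern x) := by
  by_contra! h
  have hle : #{v ∈ V | (x i).flip hc s (v i)} ≤ #{v ∈ V | x i (v i)} := by
    let x' := update x i ((x i).flip hc s)
    calc #{v ∈ V | (x i).flip hc s (v i)}
        = #{p ∈ V.image (pattern x') | p i} := by
          simp only [hV.card_filter_image_pattern, x', update_self]
      _ ≤ #{p ∈ V.image (pattern x) | p i} :=
          card_le_card fun p hp => mem_filter.2 ⟨h p (mem_filter.1 hp).2, (mem_filter.1 hp).2⟩
      _ = #{v ∈ V | x i (v i)} := hV.card_filter_image_pattern x i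
  have hflip := card_filter_flip hc hx V i
  lia

theorem IsCode.exists_cubeTiling_insert (hc : Involutive c) (hc' : ∀ s, c s ≠ s) (hV : IsCode c V)
    (hcard : #V + 1 = 2 ^ d) : ∃ s ∉ V, CubeTiling c (insert s V) := by
  have hodd (i : Fin d) : Odd #V := by
    have : Even (#V + 1) := hcard ▸ even_two.pow_of_ne_zero i.pos.ne'
    exact Nat.not_even_iff_odd.1 (Nat.even_add_one.1 this)
  choose s hs using fun i => exists_card_filter_lt_card_filter_compl hc hc' (hodd i) i
  have hdich : ∀ v ∈ V, Dich c s v := by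
    intro v hv
    by_contra hsv
    obtain ⟨x, hxs, hxv⟩ := exists_memBox_memBox hc hc' hsv
    obtain ⟨p, hp, huniq⟩ := hV.existsUnique_notMem_image_pattern hcard x
    have hpv : p = pattern x v := funext fun i => by
      obtain ⟨q, hqi, hq⟩ := hV.exists_notMem_image_pattern hc (hs i) (hxs i)
      rw [← huniq q hq, hqi]
      exact (hxv i).symm
    exact hp (hpv ▸ mem_image_of_mem _ hv)
  have hsV : s ∉ V := fun h => not_dich_self hc' s (hdich s h)
  refine ⟨s, hsV, fun v hv w hw hne => ?_, by rw [card_insert_of_notMem hsV, hcard]⟩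
  rcases mem_insert.1 hv with rfl | hvV <;> rcases mem_insert.1 hw with rfl | hwV
  · exact absurd rfl hne
  · exact hdich w hwV
  · exact (hdich v hvV).symm hc
  · exact hV v hvV w hwV hne

end Completion

theorem IsCode.exists_dependsOnlyOn {α : Type} {c : α → α} (hc : Involutive c)
    (hc' : ∀ s, c s ≠ s) {n : ℕ} {V : Finset (Fin (n + 1) → α)} (hV : IsCode c V)
    (hcard : #V + 1 = 2 ^ (n + 1)) : ∃ a, DependsOnlyOn c V a := by
  classical
  obtain ⟨s, hs, hsV⟩ := hV.exists_cubeTiling_insert hc hc' hcard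
  have hcovers (x : Fin (n + 1) → Selector c) : Covers V x ↔ ¬ MemBox x s := by
    simpa [hs, hsV.covers x] using hsV.1.covers_erase_iff (mem_insert_self s V) x
  refine ⟨s 0, fun e e' he y hy => ?_⟩
  rw [hcovers, memBox_vecCons_iff] at hy ⊢
  rwa [← he]

theorem equivalent_15_word_codes_dim4_strongly_equivalent_general {α : Type} [DecidableEq α]
    {c : α → α} (hc : Involutive c) (hc' : ∀ s, c s ≠ s) {V W : Finset (Fin 4 → α)}
    (hV : IsCode c V) (hW : IsCode c W) (h : Equivalent c V W) (hV15 : #V = 15) : GC c V W := by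
  obtain ⟨a, hdep⟩ := hV.exists_dependsOnlyOn hc hc' (by simp [hV15])
  exact hdep.gc_of_sameUnion hc hc' (fun _ _ hU hU' => gc_of_sameUnion_dim_three hc hc' hU hU')
    hV hW (h.sameUnion hc hc')

/-- Corollary "w15" of the paper. -/
theorem equivalent_15_word_codes_dim4_strongly_equivalent
    {S : Type} [Fintype S] [DecidableEq S] (c : S → S)
    (hc : ∀ s, c (c s) = s) (hc' : ∀ s, c s ≠ s)
    (hcard : Fintype.card S = 4)
    (V W : Finset (Fin 4 → S)) (hV : IsCode c V) (hW : IsCode c W)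
    (heq : Equivalent c V W) (hV15 : V.card = 15) :
    GC c V W :=
  equivalent_15_word_codes_dim4_strongly_equivalent_general hc hc' hV hW heq hV15

end PolyboxPaper
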